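/- (Differential-difference equation for generalized Hermite polynomials) Assume μ ≠ −k − 1/2 for every integer k ≥ 0. The monic generalized Hermite polynomials P_n satisfy (T_μ² P_n)(x) − 2x·(T_μ P_n)(x) + λ_n·P_n(x) = 0 for all n ≥ 0, where λ_n = 2μ_n = 2(n + δ_n); equivalently λ_{2m} = 4m and λ_{2m+1} = 2(2m + 2μ + 1). -/

import Mathlib

/-!
The generalized Hermite polynomials are an Appell sequence for the Dunkl operator:
`T_μ P_{n+1} = μ_{n+1} P_n`. Since `γ_{n+1} = μ_{n+1} / 2`, the recurrence lets this be written
without index shifts as `T_μ P_n = 2 x P_n - 2 P_{n+1}` (`dunkl_hermite`). This form is proved by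
two-step induction from the commutation rule `T_μ (x f) = x T_μ f + f + 2 μ f(-x)` (`dunkl_X_mul`)
and the parity `P_n(-x) = (-1)^n P_n(x)` (`hermite_parity`). Applying `T_μ` to
`T_μ P_{n+1} = μ_{n+1} P_n` then gives `T_μ² P_{n+1} = μ_{n+1} (2 x P_n - 2 P_{n+1})`, which is the
differential-difference equation.
-/

open Polynomial

/-- The one-dimensional Dunkl operator `T_μ`:
`(T_μ f)(x) = f'(x) + μ (f(x) - f(-x))/x`. -/
noncomputable def dunkl (μ : ℝ) (f : ℝ[X]) : ℝ[X] :=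
  derivative f + C μ * ((f - f.comp (-X)) /ₘ X)

/-- `μ_k = k + μ(1 - (-1)^k)`. -/
noncomputable def muI (μ : ℝ) (k : ℤ) : ℝ := k + μ * (1 - (-1 : ℝ) ^ k)

/-- `δ_k = μ(1 - (-1)^k)`. -/
noncomputable def deltaI (μ : ℝ) (k : ℤ) : ℝ := μ * (1 - (-1 : ℝ) ^ k)

/-- The defining formula of the Dunkl operator with the denominator cleared; the division in
`dunkl` is exact because `f(x) - f(-x)` vanishes at `0`. -/
lemma X_mul_dunkl (μ : ℝ) (f : ℝ[X]) :
    X * dunkl μ f = X * derivative f + C μ * (f - f.comp (-X)) := by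
  have h : X * ((f - f.comp (-X)) /ₘ X) = f - f.comp (-X) := by
    have h0 : (f - f.comp (-X)).IsRoot 0 := by simp [eval_comp]
    have h1 := mul_divByMonic_eq_iff_isRoot.mpr h0
    simpa using h1
  unfold dunkl
  linear_combination C μ * h

lemma dunkl_sub (μ : ℝ) (f g : ℝ[X]) : dunkl μ (f - g) = dunkl μ f - dunkl μ g := by
  apply mul_left_cancel₀ (X_ne_zero (R := ℝ))
  rw [mul_sub]
  simp only [X_mul_dunkl, derivative_sub, sub_comp]
  ring

lemma dunkl_C_mul (μ a : ℝ) (f : ℝ[X]) : dunkl μ (C a * f) = C a * dunkl μ f := by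
  apply mul_left_cancel₀ (X_ne_zero (R := ℝ))
  rw [mul_left_comm]
  simp only [X_mul_dunkl, derivative_C_mul, mul_comp, C_comp]
  ring

lemma dunkl_one (μ : ℝ) : dunkl μ 1 = 0 := by
  apply mul_left_cancel₀ (X_ne_zero (R := ℝ))
  simp [X_mul_dunkl]

/-- Commutation of the Dunkl operator with multiplication by `x`. -/
lemma dunkl_X_mul (μ : ℝ) (f : ℝ[X]) :
    dunkl μ (X * f) = X * dunkl μ f + f + 2 * C μ * f.comp (-X) := by
  apply mul_left_cancel₀ (X_ne_zero (R := ℝ))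
  rw [mul_add, mul_add]
  simp only [X_mul_dunkl, derivative_mul, derivative_X, mul_comp, X_comp]
  ring

lemma deltaI_natCast_add_one (μ : ℝ) (n : ℕ) :
    deltaI μ ((n : ℤ) + 1) = μ * (1 + (-1 : ℝ) ^ n) := by
  have h : (-1 : ℝ) ^ ((n : ℤ) + 1) = (-1 : ℝ) ^ (n + 1) := by
    rw [← zpow_natCast]; norm_cast
  rw [deltaI, h, pow_succ]
  ring

section Hermite

variable {μ : ℝ} {P : ℕ → ℝ[X]}

lemma hermite_parity {c : ℕ → ℝ} (hP0 : P 0 = 1) (hP1 : P 1 = X)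
    (hPrec : ∀ n : ℕ, P (n + 2) = X * P (n + 1) - C (c n) * P n) (n : ℕ) :
    (P n).comp (-X) = C ((-1 : ℝ) ^ n) * P n := by
  induction n using Nat.twoStepInduction with
  | zero => simp [hP0]
  | one => simp [hP1]
  | more n h0 h1 =>
    rw [hPrec, sub_comp, mul_comp, mul_comp, h0, h1]
    simp only [X_comp, C_comp, pow_succ, C_mul, C_neg, C_1]
    ring

/-- The Appell property `T_μ P_n = μ_n P_{n-1}`, with the right-hand side rewritten by the
recurrence so that no index `n - 1` occurs. -/
lemma dunkl_hermite (hP0 : P 0 = 1) (hP1 : P 1 = X)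
    (hPrec : ∀ n : ℕ,
      P (n + 2) = X * P (n + 1) - C (((n : ℝ) + 1 + μ * (1 + (-1 : ℝ) ^ n)) / 2) * P n) (n : ℕ) :
    dunkl μ (P n) = 2 * X * P n - 2 * P (n + 1) := by
  induction n using Nat.twoStepInduction with
  | zero => rw [hP0, hP1, dunkl_one]; ring
  | one =>
    have h := dunkl_X_mul μ 1
    have hc : (2 : ℝ[X]) * C (((0 : ℕ) + 1 + μ * (1 + (-1 : ℝ) ^ 0)) / 2) = 1 + 2 * C μ := by
      rw [← C_ofNat, ← C_1, ← C_mul, ← C_mul, ← C_add]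
      congr 1
      push_cast
      ring
    rw [mul_one, dunkl_one, one_comp] at h
    rw [hPrec 0, hP0, zero_add, hP1, h]
    linear_combination -hc
  | more n h0 h1 =>
    -- The coefficient identity `2 γ_{n+2} = 2 γ_{n+1} + 1 + 2 μ (-1)^{n+1}`.
    have hc : (2 : ℝ[X]) * C ((((n + 1 : ℕ) : ℝ) + 1 + μ * (1 + (-1 : ℝ) ^ (n + 1))) / 2)
        = 2 * C (((n : ℝ) + 1 + μ * (1 + (-1 : ℝ) ^ n)) / 2)
          + 1 + 2 * C μ * C ((-1 : ℝ) ^ (n + 1)) := by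
      rw [← C_ofNat, ← C_1, ← C_mul, ← C_mul, ← C_mul, ← C_mul, ← C_add, ← C_add]
      congr 1
      push_cast
      ring
    have h2 : dunkl μ (P (n + 2)) = X * dunkl μ (P (n + 1)) + P (n + 1)
        + 2 * C μ * (C ((-1 : ℝ) ^ (n + 1)) * P (n + 1))
        - C (((n : ℝ) + 1 + μ * (1 + (-1 : ℝ) ^ n)) / 2) * dunkl μ (P n) := by
      rw [hPrec n, dunkl_sub, dunkl_C_mul, dunkl_X_mul, hermite_parity hP0 hP1 hPrec]
    rw [h2, h0, h1]
    linear_combination (-2 * X) * hPrec n + 2 * hPrec (n + 1) - P (n + 1) * hc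

end Hermite

/-- **Statement 11.** The monic generalized Hermite polynomials satisfy
`T_μ² P_n - 2x T_μ P_n + λ_n P_n = 0` with `λ_n = 2μ_n = 2(n + δ_n)`; equivalently
`λ_{2m} = 4m` and `λ_{2m+1} = 2(2m + 2μ + 1)`. -/
theorem generalizedHermite_diff_eq (μ : ℝ)
    (hμ : ∀ k : ℕ, μ ≠ -(k : ℝ) - 1 / 2)
    (P : ℕ → ℝ[X]) (hP0 : P 0 = 1) (hP1 : P 1 = X)
    (hPrec : ∀ n : ℕ,
      P (n + 2) = X * P (n + 1) - C (((n : ℝ) + 1 + deltaI μ (n + 1)) / 2) * P n) :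
    (∀ n : ℕ,
      dunkl μ (dunkl μ (P n)) - 2 * X * dunkl μ (P n) + C (2 * muI μ n) * P n = 0) ∧
    (∀ m : ℕ, 2 * muI μ (2 * m) = 4 * m ∧
      2 * muI μ (2 * m + 1) = 2 * (2 * m + 2 * μ + 1)) := by
  refine ⟨fun n => ?_, fun m => ⟨?_, ?_⟩⟩
  · simp only [deltaI_natCast_add_one] at hPrec
    have hT := dunkl_hermite hP0 hP1 hPrec
    cases n with
    | zero =>
      have h0 : dunkl μ 0 = 0 := by simp [dunkl]
      simp [hP0, dunkl_one, h0, muI]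
    | succ n =>
      have hm : muI μ ((n + 1 : ℕ) : ℤ) = (n : ℝ) + 1 + μ * (1 + (-1 : ℝ) ^ n) := by
        have h := deltaI_natCast_add_one μ n
        unfold deltaI at h
        unfold muI
        push_cast
        rw [h]
      set a : ℝ := (n : ℝ) + 1 + μ * (1 + (-1 : ℝ) ^ n) with ha
      have hc : (2 : ℝ[X]) * C (a / 2) = C a := by
        rw [← C_ofNat, ← C_mul]
        congr 1
        ring
      have hA : dunkl μ (P (n + 1)) = C a * P n := by
        rw [hT]
        linear_combination (-2) * hPrec n + P n * hc
      rw [hA, dunkl_C_mul, hT n, hm, C_mul, C_ofNat]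
      ring
  · have h : (-1 : ℝ) ^ (2 * (m : ℤ)) = 1 := by
      rw [zpow_mul]; norm_num
    rw [muI, h]
    push_cast
    ring
  · have h : (-1 : ℝ) ^ (2 * (m : ℤ) + 1) = -1 := by
      rw [zpow_add₀ (by norm_num), zpow_mul]; norm_num
    rw [muI, h]
    push_cast
    ring
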